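/- (Carathéodory number 3) Let (S,d) be a Busemann surface. For any finite nonempty set Q ⊆ S, conv(Q) = ⋃ { conv({x,y,z}) : x, y, z ∈ Q }. -/

import Mathlib

open Metric Set MeasureTheory

/-- `γ` is a geodesic on the interval `[a, b]`. -/
def IsGeodesicOn {S : Type*} [MetricSpace S] (γ : ℝ → S) (a b : ℝ) : Prop :=
  ∀ s ∈ Set.Icc a b, ∀ t ∈ Set.Icc a b, dist (γ s) (γ t) = |s - t|

/-- `γ` is a geodesic from `x` to `y`. -/
def IsGeodesicFromTo {S : Type*} [MetricSpace S] (γ : ℝ → S) (x y : S) : Prop :=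
  IsGeodesicOn γ 0 (dist x y) ∧ γ 0 = x ∧ γ (dist x y) = y

/-- A geodesic metric space: every pair of points is joined by a geodesic. -/
def IsGeodesicMetricSpace (S : Type*) [MetricSpace S] : Prop :=
  ∀ x y : S, ∃ γ : ℝ → S, IsGeodesicFromTo γ x y

/-- A Busemann space: a geodesic metric space in which the distance function between
any two geodesics is convex. -/
def IsBusemannSpace (S : Type*) [MetricSpace S] : Prop :=
  IsGeodesicMetricSpace S ∧
    ∀ (γ γ' : ℝ → S) (a b a' b' : ℝ), a ≤ b → a' ≤ b' →
      IsGeodesicOn γ a b → IsGeodesicOn γ' a' b' →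
      ConvexOn ℝ (Set.Icc (0 : ℝ) 1)
        (fun t => dist (γ ((1 - t) * a + t * b)) (γ' ((1 - t) * a' + t * b')))

/-- A Busemann surface: a Busemann space homeomorphic to the plane `ℝ²`. -/
def IsBusemannSurface (S : Type*) [MetricSpace S] : Prop :=
  IsBusemannSpace S ∧ Nonempty (S ≃ₜ (ℝ × ℝ))

/-- `G` is the image of a geodesic from `x` to `y`. -/
def IsGeodesicSegment {S : Type*} [MetricSpace S] (x y : S) (G : Set S) : Prop :=
  ∃ γ : ℝ → S, IsGeodesicFromTo γ x y ∧ G = γ '' Set.Icc 0 (dist x y)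

/-- Convexity of a set with respect to a geodesic-segment assignment `seg`. -/
def SegConvex {S : Type*} (seg : S → S → Set S) (R : Set S) : Prop :=
  ∀ p ∈ R, ∀ q ∈ R, seg p q ⊆ R

/-- The convex hull: the smallest `seg`-convex set containing `Q`. -/
def segConvexHull {S : Type*} (seg : S → S → Set S) (Q : Set S) : Set S :=
  ⋂₀ {R : Set S | SegConvex seg R ∧ Q ⊆ R}

/-- A line of `S`: the image of an isometric embedding of `ℝ` into `S`. -/
def IsLineSet {S : Type*} [MetricSpace S] (L : Set S) : Prop :=
  ∃ ℓ : ℝ → S, Isometry ℓ ∧ L = Set.range ℓ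

/-- An open halfplane determined by a line `L`: a connected component of `S \ L`. -/
def IsOpenHalfplane {S : Type*} [MetricSpace S] (L H : Set S) : Prop :=
  ∃ x, x ∉ L ∧ H = connectedComponentIn Lᶜ x

/-- A closed halfplane determined by a line `L`: an open halfplane together with `L`. -/
def IsClosedHalfplane {S : Type*} [MetricSpace S] (L H : Set S) : Prop :=
  ∃ H', IsOpenHalfplane L H' ∧ H = H' ∪ L

/-- `X` and `Y` are line-separable: they lie in different open halfplanes of some line. -/
def LineSeparable {S : Type*} [MetricSpace S] (X Y : Set S) : Prop :=
  ∃ L H₁ H₂ : Set S, IsLineSet L ∧ IsOpenHalfplane L H₁ ∧ IsOpenHalfplane L H₂ ∧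
    H₁ ≠ H₂ ∧ X ⊆ H₁ ∧ Y ⊆ H₂

/-- `X` and `Y` are weakly line-separable: they lie in different closed halfplanes of
some line. -/
def WeaklyLineSeparable {S : Type*} [MetricSpace S] (X Y : Set S) : Prop :=
  ∃ L H₁ H₂ : Set S, IsLineSet L ∧ IsClosedHalfplane L H₁ ∧ IsClosedHalfplane L H₂ ∧
    H₁ ≠ H₂ ∧ X ⊆ H₁ ∧ Y ⊆ H₂

/-- `Q` is in general position: no three distinct points of `Q` lie on a common line. -/
def InGeneralPosition {S : Type*} [MetricSpace S] (Q : Set S) : Prop :=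
  ∀ x ∈ Q, ∀ y ∈ Q, ∀ z ∈ Q, x ≠ y → y ≠ z → x ≠ z →
    ∀ L : Set S, IsLineSet L → ¬(x ∈ L ∧ y ∈ L ∧ z ∈ L)

/-- `L` is a tangent line of the set `K`. -/
def IsTangentLine {S : Type*} [MetricSpace S] (L K : Set S) : Prop :=
  IsLineSet L ∧ (K ∩ L).Nonempty ∧ ∃ H, IsClosedHalfplane L H ∧ K ⊆ H

/-- `L` is an inner bitangent of `K'` and `K''`. -/
def IsInnerBitangent {S : Type*} [MetricSpace S] (L K' K'' : Set S) : Prop :=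
  IsTangentLine L K' ∧ IsTangentLine L K'' ∧
    ∃ H₁ H₂, IsClosedHalfplane L H₁ ∧ IsClosedHalfplane L H₂ ∧ H₁ ≠ H₂ ∧
      K' ⊆ H₁ ∧ K'' ⊆ H₂

/-- metric interval -/
def MI {S : Type*} [MetricSpace S] (x y : S) : Set S := {w | dist x w + dist w y = dist x y}

structure Geo (S : Type*) [MetricSpace S] (pt : S → S → ℝ → S) : Prop where
  d : ∀ x y, ∀ s ∈ Icc (0:ℝ) 1, ∀ t ∈ Icc (0:ℝ) 1,
    dist (pt x y s) (pt x y t) = |s - t| * dist x y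
  p0 : ∀ x y, pt x y 0 = x
  p1 : ∀ x y, pt x y 1 = y
  conv : ∀ x y y', ∀ t ∈ Icc (0:ℝ) 1, dist (pt x y t) (pt x y' t) ≤ t * dist y y'
  uniq : ∀ x y w, w ∈ MI x y → 0 < dist x y → w = pt x y (dist x w / dist x y)

theorem geod_unique {S : Type*} [MetricSpace S] (hS : IsBusemannSpace S) {x y : S}
    {γ γ' : ℝ → S} (h : IsGeodesicFromTo γ x y) (h' : IsGeodesicFromTo γ' x y)
    (s : ℝ) (hs : s ∈ Icc 0 (dist x y)) : γ s = γ' s := by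
  rcases (dist_nonneg (x := x) (y := y)).eq_or_lt with h0 | h0
  · have : s = 0 := le_antisymm (h0 ▸ hs.2) hs.1
    rw [this, h.2.1, h'.2.1]
  have hc := (hS.2 γ γ' 0 (dist x y) 0 (dist x y) h0.le h0.le h.1 h'.1)
  replace hc := hc.2 (show (0:ℝ) ∈ Icc (0:ℝ) 1 by simp) (show (1:ℝ) ∈ Icc (0:ℝ) 1 by simp)
    (show 0 ≤ 1 - s / dist x y by rw [sub_nonneg, div_le_one h0]; exact hs.2)
    (div_nonneg hs.1 h0.le) (by ring)
  have e : s / dist x y * dist x y = s := by field_simp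
  simp [h.2.1, h'.2.1, h.2.2, h'.2.2, e] at hc
  exact hc

theorem concat_geod {S : Type*} [MetricSpace S] {x y w : S} (hw : w ∈ MI x y)
    {γ γ' : ℝ → S} (h : IsGeodesicFromTo γ x w) (h' : IsGeodesicFromTo γ' w y) :
    IsGeodesicFromTo (fun s => if s ≤ dist x w then γ s else γ' (s - dist x w)) x y := by
  have hw' : dist x w + dist w y = dist x y := hw
  have n1 := dist_nonneg (x := x) (y := w)
  have n2 := dist_nonneg (x := w) (y := y)
  have key : ∀ s ∈ Icc 0 (dist x y), ∀ t ∈ Icc 0 (dist x y), s ≤ dist x w → ¬ t ≤ dist x w →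
      dist (γ s) (γ' (t - dist x w)) = t - s := by
    intro s hs t ht h1 h2
    rw [not_le] at h2
    have a1 := h.1 0 ⟨le_rfl, n1⟩ s ⟨hs.1, h1⟩
    have a2 := h.1 s ⟨hs.1, h1⟩ (dist x w) ⟨n1, le_rfl⟩
    have a3 := h'.1 0 ⟨le_rfl, n2⟩ (t - dist x w) ⟨by linarith, by linarith [ht.2]⟩
    have a4 := h'.1 (t - dist x w) ⟨by linarith, by linarith [ht.2]⟩ (dist w y) ⟨n2, le_rfl⟩
    rw [h.2.1, abs_of_nonpos (by linarith [hs.1])] at a1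
    rw [h.2.2, abs_of_nonpos (by linarith [hs.1])] at a2
    rw [h'.2.1, abs_of_nonpos (by linarith [hs.1])] at a3
    rw [h'.2.2, abs_of_nonpos (by linarith [ht.2])] at a4
    have t1 := dist_triangle (γ s) w (γ' (t - dist x w))
    have t2 := dist_triangle4 x (γ s) (γ' (t - dist x w)) y
    linarith
  refine ⟨?_, ?_, ?_⟩
  · intro s hs t ht
    by_cases h1 : s ≤ dist x w <;> by_cases h2 : t ≤ dist x w <;> simp only [h1, h2, if_true, if_false]
    · exact h.1 s ⟨hs.1, h1⟩ t ⟨ht.1, h2⟩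
    · rw [key s hs t ht h1 h2, abs_of_nonpos (by linarith)]; ring
    · rw [dist_comm, key t ht s hs h2 h1, abs_of_nonneg (by linarith)]
    · rw [not_le] at h1 h2
      rw [h'.1 _ ⟨by linarith, by linarith [hs.2]⟩ _ ⟨by linarith, by linarith [ht.2]⟩]
      congr 1; ring
  · simp [n1, h.2.1]
  · by_cases h3 : dist x y ≤ dist x w
    · have : dist w y = 0 := by linarith
      have e := dist_eq_zero.1 this
      subst e
      simp [h.2.2]
    · simp only [h3, if_false]
      rw [← hw', add_sub_cancel_left, h'.2.2]

theorem exists_geo {S : Type*} [MetricSpace S] (hS : IsBusemannSpace S) :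
    ∃ pt : S → S → ℝ → S, Geo S pt := by
  choose γ hγ using hS.1
  refine ⟨fun x y t => γ x y (t * dist x y), ?_, ?_, ?_, ?_, ?_⟩
  · intro x y s hs t ht
    have n := dist_nonneg (x := x) (y := y)
    rw [(hγ x y).1 _ ⟨mul_nonneg hs.1 n, mul_le_of_le_one_left n hs.2⟩ _
      ⟨mul_nonneg ht.1 n, mul_le_of_le_one_left n ht.2⟩, ← sub_mul, abs_mul, abs_of_nonneg n]
  · intro x y; simp [(hγ x y).2.1]
  · intro x y; simp [(hγ x y).2.2]
  · intro x y y' t ht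
    have hc := (hS.2 (γ x y) (γ x y') 0 (dist x y) 0 (dist x y') dist_nonneg dist_nonneg
      (hγ x y).1 (hγ x y').1)
    replace hc := hc.2 (show (0:ℝ) ∈ Icc (0:ℝ) 1 by simp) (show (1:ℝ) ∈ Icc (0:ℝ) 1 by simp)
      (show 0 ≤ 1 - t by linarith [ht.2]) ht.1 (by ring)
    simpa [(hγ x y).2.1, (hγ x y').2.1, (hγ x y).2.2, (hγ x y').2.2] using hc
  · intro x y w hw h0
    have hw' : dist x w + dist w y = dist x y := hw
    have n1 := dist_nonneg (x := x) (y := w)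
    have n2 := dist_nonneg (x := w) (y := y)
    have := geod_unique hS (hγ x y) (concat_geod hw (hγ x w) (hγ w y)) (dist x w)
      ⟨n1, by linarith⟩
    have e : dist x w / dist x y * dist x y = dist x w := by field_simp
    simp only [e]
    rw [this]
    simp [(hγ x w).2.2]

theorem seg_eq {S : Type*} [MetricSpace S] (hS : IsBusemannSpace S) {x y : S} {G : Set S}
    (hG : IsGeodesicSegment x y G) : G = MI x y := by
  obtain ⟨γ, hγ, rfl⟩ := hG
  ext w
  constructor
  · rintro ⟨s, hs, rfl⟩
    have a1 := hγ.1 0 ⟨le_rfl, dist_nonneg⟩ s hs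
    have a2 := hγ.1 s hs (dist x y) ⟨dist_nonneg, le_rfl⟩
    rw [hγ.2.1, abs_of_nonpos (by linarith [hs.1])] at a1
    rw [hγ.2.2, abs_of_nonpos (by linarith [hs.2])] at a2
    show _ + _ = _
    rw [a1, a2]; ring
  · intro hw
    have hw' : dist x w + dist w y = dist x y := hw
    have n1 := dist_nonneg (x := x) (y := w)
    have n2 := dist_nonneg (x := w) (y := y)
    obtain ⟨γ1, h1⟩ := hS.1 x w
    obtain ⟨γ2, h2⟩ := hS.1 w y
    refine ⟨dist x w, ⟨n1, by linarith⟩, ?_⟩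
    rw [geod_unique hS hγ (concat_geod hw h1 h2) (dist x w) ⟨n1, by linarith⟩]
    simp [h1.2.2]

/-- continuous logarithm of `f - f v` on `K` -/
def HasLog {S : Type*} [MetricSpace S] (f : S → ℂ) (K : Set S) (v : S) : Prop :=
  ∃ g : S → ℂ, ContinuousOn g K ∧ ∀ x ∈ K, Complex.exp (g x) = f x - f v

theorem HasLog.mono {S : Type*} [MetricSpace S] {f : S → ℂ} {K K' : Set S} {v : S}
    (h : HasLog f K v) (hK : K' ⊆ K) : HasLog f K' v := by
  obtain ⟨g, h1, h2⟩ := h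
  exact ⟨g, h1.mono hK, fun x hx => h2 x (hK hx)⟩

theorem log_diff_const {X : Type*} [TopologicalSpace X] {K : Set X} (hK : IsPreconnected K)
    {g g' : X → ℂ} (hg : ContinuousOn g K) (hg' : ContinuousOn g' K)
    (h : ∀ x ∈ K, Complex.exp (g x) = Complex.exp (g' x)) {x y : X} (hx : x ∈ K) (hy : y ∈ K) :
    g x - g' x = g y - g' y := by
  have hpi : (2 * Real.pi * Complex.I : ℂ) ≠ 0 := Complex.two_pi_I_ne_zero
  have hn : ∀ z ∈ K, ∃ n : ℤ, (g z - g' z) / (2 * Real.pi * Complex.I) = n := by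
    intro z hz
    obtain ⟨n, hn⟩ := Complex.exp_eq_exp_iff_exists_int.1 (h z hz)
    refine ⟨n, ?_⟩
    rw [hn]; field_simp; ring
  have hc : ContinuousOn (fun z => ((g z - g' z) / (2 * Real.pi * Complex.I)).re) K :=
    Complex.continuous_re.comp_continuousOn ((hg.sub hg').div_const _)
  have hdisc : IsDiscrete (range ((↑) : ℤ → ℝ)) := by
    have := Int.isClosedEmbedding_coe_real.isEmbedding
    exact isDiscrete_iff_discreteTopology.2 (this.toHomeomorph.symm.isEmbedding.discreteTopology)
  have := hK.constant_of_mapsTo hdisc hc (fun z hz => by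
    obtain ⟨n, hn⟩ := hn z hz
    exact ⟨n, by simp only [hn]; simp⟩) hx hy
  obtain ⟨n, hn1⟩ := hn x hx
  obtain ⟨m, hm1⟩ := hn y hy
  simp only [hn1, hm1] at this
  simp at this
  rw [div_eq_iff hpi] at hn1 hm1
  rw [hn1, hm1, this]

theorem HasLog.union {S : Type*} [MetricSpace S] {f : S → ℂ} {K K' : Set S} {v : S}
    (h : HasLog f K v) (h' : HasLog f K' v) (hK : IsClosed K) (hK' : IsClosed K')
    (hc : IsPreconnected (K ∩ K')) : HasLog f (K ∪ K') v := by
  classical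
  obtain ⟨g, h1, h2⟩ := h
  obtain ⟨g', h1', h2'⟩ := h'
  have : ∃ c : ℂ, Complex.exp c = 1 ∧ ∀ x ∈ K ∩ K', g x = g' x + c := by
    rcases (K ∩ K').eq_empty_or_nonempty with he | ⟨x0, hx0⟩
    · exact ⟨0, by simp, by simp [he]⟩
    · refine ⟨g x0 - g' x0, ?_, ?_⟩
      · rw [Complex.exp_sub, h2 _ hx0.1, h2' _ hx0.2, div_self]
        rw [← h2 _ hx0.1]; exact Complex.exp_ne_zero _
      · intro x hx
        have := log_diff_const hc (h1.mono inter_subset_left) (h1'.mono inter_subset_right)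
          (fun x hx => (h2 x hx.1).trans (h2' x hx.2).symm) hx hx0
        rw [← this]; ring
  obtain ⟨c, hc1, hc2⟩ := this
  have e1 : EqOn (fun x => if x ∈ K then g x else g' x + c) g K := fun x hx => by simp [hx]
  have e2 : EqOn (fun x => if x ∈ K then g x else g' x + c) (fun x => g' x + c) K' := by
    intro x hx
    by_cases hxK : x ∈ K
    · simp [hxK, hc2 x ⟨hxK, hx⟩]
    · simp [hxK]
  refine ⟨fun x => if x ∈ K then g x else g' x + c, ?_, ?_⟩
  · exact (h1.congr e1).union_of_isClosed ((h1'.add continuousOn_const).congr e2) hK hK'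
  · rintro x (hx | hx)
    · rw [e1 hx, h2 x hx]
    · rw [e2 hx, Complex.exp_add, hc1, mul_one, h2' x hx]

/-- quotient close to one -/
theorem slit_of_close {z w : ℂ} (hw : w ≠ 0) (h : ‖z - w‖ < ‖w‖) : z / w ∈ Complex.slitPlane := by
  apply Complex.ball_one_subset_slitPlane
  rw [mem_ball, dist_eq_norm]
  have : z / w - 1 = (z - w) / w := by field_simp
  rw [this, norm_div, div_lt_one (norm_pos_iff.2 hw)]
  exact h

theorem log_shift {S : Type*} [MetricSpace S] {f : S → ℂ} (hf : Continuous f) {K : Set S} {v v' : S}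
    {g : S → ℂ} (hg : ContinuousOn g K) (h : ∀ x ∈ K, Complex.exp (g x) = f x - f v)
    (hv : ∀ x ∈ K, ‖f v' - f v‖ < ‖f x - f v‖) :
    ContinuousOn (fun x => g x + Complex.log ((f x - f v') / (f x - f v))) K ∧
    ∀ x ∈ K, Complex.exp (g x + Complex.log ((f x - f v') / (f x - f v))) = f x - f v' := by
  have hne : ∀ x ∈ K, f x - f v ≠ 0 := fun x hx => by
    rw [← h x hx]; exact Complex.exp_ne_zero _
  have hs : ∀ x ∈ K, (f x - f v') / (f x - f v) ∈ Complex.slitPlane := fun x hx => by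
    apply slit_of_close (hne x hx)
    have e : f x - f v' - (f x - f v) = -(f v' - f v) := by ring
    rw [e, norm_neg]; exact hv x hx
  constructor
  · exact hg.add (ContinuousOn.clog ((hf.continuousOn.sub continuousOn_const).div
      (hf.continuousOn.sub continuousOn_const) hne) hs)
  · intro x hx
    rw [Complex.exp_add, Complex.exp_log (Complex.slitPlane_ne_zero (hs x hx)), h x hx]
    have := hne x hx
    field_simp

theorem exists_gap {S : Type*} [MetricSpace S] {f : S → ℂ} (hf : Continuous f)
    (hi : Function.Injective f) {K : Set S} (hK : IsCompact K) {v : S} (hv : v ∉ K) :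
    ∃ ε > 0, ∀ x ∈ K, ε ≤ ‖f x - f v‖ := by
  rcases K.eq_empty_or_nonempty with rfl | hne
  · exact ⟨1, one_pos, by simp⟩
  obtain ⟨x, hx, hm⟩ := hK.exists_isMinOn hne
    (f := fun x => ‖f x - f v‖) (by fun_prop)
  refine ⟨‖f x - f v‖, ?_, fun y hy => hm hy⟩
  rw [gt_iff_lt, norm_pos_iff, sub_ne_zero]
  intro h; rw [hi h] at hx; exact hv hx

theorem HasLog.const_on {S : Type*} [MetricSpace S] {f : S → ℂ} (hf : Continuous f)
    (hi : Function.Injective f) {K : Set S} (hK : IsCompact K) {C : Set S} (hC : IsPreconnected C)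
    (hd : Disjoint C K) {v w : S} (hv : v ∈ C) (hw : w ∈ C) (h : HasLog f K v) : HasLog f K w := by
  have key : ∀ v ∉ K, ∃ U : Set S, IsOpen U ∧ v ∈ U ∧ ∀ w ∈ U, (HasLog f K w ↔ HasLog f K v) := by
    intro v hv
    obtain ⟨ε, hε, h⟩ := exists_gap hf hi hK hv
    refine ⟨{w | ‖f w - f v‖ < ε / 2}, isOpen_lt (by fun_prop) (by fun_prop), by simpa, ?_⟩
    intro w hw
    have hw' : ‖f w - f v‖ < ε / 2 := hw
    constructor
    · rintro ⟨g, h1, h2⟩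
      refine ⟨_, log_shift hf h1 h2 (v' := v) fun x hx => ?_⟩
      have := h x hx
      have t : ‖f x - f v‖ ≤ ‖f x - f w‖ + ‖f w - f v‖ := norm_sub_le_norm_sub_add_norm_sub ..
      rw [norm_sub_rev (f v)]
      linarith
    · rintro ⟨g, h1, h2⟩
      exact ⟨_, log_shift hf h1 h2 (v' := w) fun x hx => by linarith [h x hx]⟩
  choose! U hU1 hU2 hU3 using key
  by_contra hnw
  have := hC (⋃ v ∈ {v | v ∉ K ∧ HasLog f K v}, U v) (⋃ v ∈ {v | v ∉ K ∧ ¬ HasLog f K v}, U v)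
    (isOpen_biUnion fun v hv => hU1 v hv.1) (isOpen_biUnion fun v hv => hU1 v hv.1)
    (fun x hx => by
      have hxK := hd.notMem_of_mem_left hx
      by_cases hl : HasLog f K x
      · left; exact mem_biUnion (show x ∈ _ from ⟨hxK, hl⟩) (hU2 x hxK)
      · right; exact mem_biUnion (show x ∈ _ from ⟨hxK, hl⟩) (hU2 x hxK))
    ⟨v, hv, mem_biUnion (show v ∈ _ from ⟨hd.notMem_of_mem_left hv, h⟩)
      (hU2 v (hd.notMem_of_mem_left hv))⟩
    ⟨w, hw, mem_biUnion (show w ∈ _ from ⟨hd.notMem_of_mem_left hw, hnw⟩)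
      (hU2 w (hd.notMem_of_mem_left hw))⟩
  obtain ⟨x, hx, hx1, hx2⟩ := this
  simp only [mem_iUnion] at hx1 hx2
  obtain ⟨p, ⟨hp1, hp2⟩, hp3⟩ := hx1
  obtain ⟨q, ⟨hq1, hq2⟩, hq3⟩ := hx2
  exact hq2 ((hU3 q hq1 x hq3).1 ((hU3 p hp1 x hp3).2 hp2))

/-- there is no continuous logarithm of `(C - w)/(B - w)` off `B, C`. -/
theorem no_log {B C : ℂ} (hBC : B ≠ C) (G : ℂ → ℂ) (hG : ∀ w, w ≠ B → w ≠ C → ContinuousAt G w)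
    (hexp : ∀ w, w ≠ B → w ≠ C → Complex.exp (G w) = (C - w) / (B - w)) : False := by
  have hr : 0 < ‖C - B‖ / 2 := by
    have : 0 < ‖C - B‖ := norm_pos_iff.2 (sub_ne_zero.2 hBC.symm)
    linarith
  set r := ‖C - B‖ / 2 with hrdef
  have hCB : C - B ≠ 0 := sub_ne_zero.2 hBC.symm
  let W : ℝ → ℂ := fun θ => B + r * Complex.exp (θ * Complex.I)
  have hWn : ∀ θ, ‖W θ - B‖ = r := by
    intro θ
    simp only [W, add_sub_cancel_left, norm_mul, Complex.norm_exp_ofReal_mul_I, mul_one]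
    simp [abs_of_pos hr]
  have hWB : ∀ θ, W θ ≠ B := by
    intro θ h
    have := hWn θ
    rw [h] at this; simp at this; linarith
  have hWC : ∀ θ, W θ ≠ C := by
    intro θ h
    have := hWn θ
    rw [h] at this; linarith
  have hWc : Continuous W := by fun_prop
  have hsl : ∀ θ, (C - W θ) / (C - B) ∈ Complex.slitPlane := by
    intro θ
    apply slit_of_close hCB
    have e : C - W θ - (C - B) = -(W θ - B) := by ring
    rw [e, norm_neg, hWn]; linarith
  have c1 : Continuous fun θ => Complex.log ((C - W θ) / (C - B)) - G (W θ) :=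
    (Continuous.clog (by fun_prop) hsl).sub
      (continuous_iff_continuousAt.2 fun θ =>
        ContinuousAt.comp (f := W) (g := G) (hG _ (hWB θ) (hWC θ)) hWc.continuousAt)
  have c2 : Continuous fun θ : ℝ => (θ : ℂ) * Complex.I + Complex.log (-r / (C - B)) := by fun_prop
  have hr' : (r : ℂ) ≠ 0 := by exact_mod_cast hr.ne'
  have := log_diff_const (K := univ) isPreconnected_univ c1.continuousOn c2.continuousOn
    (by
      intro θ _
      have hB : B - W θ ≠ 0 := sub_ne_zero.2 (hWB θ).symm
      have hC : C - W θ ≠ 0 := sub_ne_zero.2 (hWC θ).symm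
      rw [Complex.exp_sub, Complex.exp_log (Complex.slitPlane_ne_zero (hsl θ)),
        hexp _ (hWB θ) (hWC θ), Complex.exp_add, Complex.exp_log
          (div_ne_zero (neg_ne_zero.2 hr') hCB)]
      have : B - W θ = - (r * Complex.exp (θ * Complex.I)) := by simp [W]
      field_simp
      rw [this]; ring) (mem_univ 0) (mem_univ (2 * Real.pi))
  have hW : W (2 * Real.pi) = W 0 := by
    simp [W, Complex.exp_two_pi_mul_I]
  simp only [hW] at this
  have h2 := sub_right_inj.1 this
  simp at h2

section MIbasic
variable {S : Type*} [MetricSpace S]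

theorem mem_MI {x y w : S} : w ∈ MI x y ↔ dist x w + dist w y = dist x y := Iff.rfl

theorem MI_comm (x y : S) : MI x y = MI y x := by
  ext w
  rw [mem_MI, mem_MI, dist_comm x w, dist_comm w y, dist_comm x y, add_comm]

theorem left_MI (x y : S) : x ∈ MI x y := by simp [mem_MI]

theorem right_MI (x y : S) : y ∈ MI x y := by simp [mem_MI]

theorem MI_trans {x y p w : S} (hp : p ∈ MI x y) (hw : w ∈ MI x p) : w ∈ MI x y := by
  rw [mem_MI] at *
  have := dist_triangle w p y
  have := dist_triangle x w y
  linarith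

theorem MI_trans' {x y p w : S} (hp : p ∈ MI x y) (hw : w ∈ MI x p) : p ∈ MI w y := by
  have h := MI_trans hp hw
  rw [mem_MI] at *
  linarith

theorem MI_trans2 {x y p w : S} (hp : p ∈ MI x y) (hw : w ∈ MI p y) : w ∈ MI x y := by
  rw [MI_comm] at *
  exact MI_trans hp hw

theorem MI_trans2' {x y p w : S} (hp : p ∈ MI x y) (hw : w ∈ MI p y) : p ∈ MI x w := by
  rw [MI_comm] at *
  exact MI_trans' hp hw

theorem MI_self {x w : S} (h : w ∈ MI x x) : w = x := by
  rw [mem_MI, dist_self, dist_comm w x] at h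
  have := dist_nonneg (x := x) (y := w)
  exact (dist_eq_zero.1 (by linarith)).symm

/-- join of a point and a set -/
def Jn (a : S) (K : Set S) : Set S := {u | ∃ y ∈ K, u ∈ MI a y}

/-- convexity with respect to metric intervals -/
def MC (R : Set S) : Prop := ∀ p ∈ R, ∀ q ∈ R, MI p q ⊆ R

theorem MC.inter {R R' : Set S} (h : MC R) (h' : MC R') : MC (R ∩ R') :=
  fun p hp q hq _ hx => ⟨h p hp.1 q hq.1 hx, h' p hp.2 q hq.2 hx⟩

theorem Jn_star {a : S} {K : Set S} {x : S} (hx : x ∈ Jn a K) : MI a x ⊆ Jn a K := by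
  obtain ⟨y, hy, hxy⟩ := hx
  exact fun w hw => ⟨y, hy, MI_trans hxy hw⟩

theorem sub_Jn {a : S} {K : Set S} : K ⊆ Jn a K := fun y hy => ⟨y, hy, right_MI _ _⟩

theorem MI_sub_Jn {a b : S} {K : Set S} (h : b ∈ K) : MI a b ⊆ Jn a K := fun _ hx => ⟨b, h, hx⟩

theorem MI_eq_Jn (a b : S) : MI a b = Jn a {b} := by ext; simp [Jn]

/-- the boundary of a triangle -/
def Bd (a b c : S) : Set S := MI a b ∪ MI b c ∪ MI a c

theorem Bd_sub (a b c : S) : Bd a b c ⊆ Jn a (MI b c) := by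
  rintro x ((hx | hx) | hx)
  · exact MI_sub_Jn (left_MI _ _) hx
  · exact sub_Jn hx
  · exact MI_sub_Jn (right_MI _ _) hx

theorem Bd_rot (a b c : S) : Bd c a b = Bd a b c := by
  simp only [Bd, MI_comm c a, MI_comm c b]
  ext; simp only [mem_union]; tauto

end MIbasic

section GeoFacts
variable {S : Type*} [MetricSpace S] {pt : S → S → ℝ → S}

theorem Geo.dl (G : Geo S pt) (x y : S) {t : ℝ} (ht : t ∈ Icc (0:ℝ) 1) :
    dist x (pt x y t) = t * dist x y := by
  have := G.d x y 0 (by simp) t ht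
  rw [G.p0] at this
  rw [this]; simp [abs_of_nonneg ht.1]

theorem Geo.dr (G : Geo S pt) (x y : S) {t : ℝ} (ht : t ∈ Icc (0:ℝ) 1) :
    dist (pt x y t) y = (1 - t) * dist x y := by
  have := G.d x y t ht 1 (by simp)
  rw [G.p1] at this
  rw [this, abs_of_nonpos (by linarith [ht.2])]; ring

theorem Geo.mem (G : Geo S pt) (x y : S) {t : ℝ} (ht : t ∈ Icc (0:ℝ) 1) :
    pt x y t ∈ MI x y := by
  rw [mem_MI, G.dl x y ht, G.dr x y ht]; ring

theorem Geo.ex (G : Geo S pt) {x y w : S} (h : w ∈ MI x y) :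
    ∃ t ∈ Icc (0:ℝ) 1, w = pt x y t := by
  rcases (dist_nonneg (x := x) (y := y)).eq_or_lt with h0 | h0
  · have := dist_eq_zero.1 h0.symm
    subst this
    exact ⟨0, by simp, by rw [G.p0]; exact MI_self h⟩
  · refine ⟨_, ⟨by positivity, ?_⟩, G.uniq x y w h h0⟩
    rw [div_le_one h0]
    rw [mem_MI] at h
    linarith [dist_nonneg (x := w) (y := y)]

theorem Geo.order (G : Geo S pt) {x y p q : S} (hp : p ∈ MI x y) (hq : q ∈ MI x y)
    (h : dist x p ≤ dist x q) : p ∈ MI x q := by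
  obtain ⟨s, hs, rfl⟩ := G.ex hp
  obtain ⟨t, ht, rfl⟩ := G.ex hq
  rw [mem_MI, G.dl x y hs, G.dl x y ht, G.d x y s hs t ht]
  rw [G.dl x y hs, G.dl x y ht] at h
  rcases le_total s t with h1 | h1
  · rw [abs_of_nonpos (by linarith)]; ring
  · rw [abs_of_nonneg (by linarith)]; nlinarith [dist_nonneg (x := x) (y := y)]

theorem Geo.order' (G : Geo S pt) {x y p q : S} (hp : p ∈ MI x y) (hq : q ∈ MI x y) :
    p ∈ MI x q ∨ q ∈ MI x p := by
  rcases le_total (dist x p) (dist x q) with h | h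
  · exact Or.inl (G.order hp hq h)
  · exact Or.inr (G.order hq hp h)

theorem Geo.MC_MI (G : Geo S pt) (x y : S) : MC (MI x y) := by
  have key : ∀ p q, p ∈ MI x y → q ∈ MI x y → p ∈ MI x q → MI p q ⊆ MI x y := by
    intro p q hp hq h w hw
    exact MI_trans hq (MI_trans2 h hw)
  intro p hp q hq
  rcases G.order' hp hq with h | h
  · exact key p q hp hq h
  · rw [MI_comm]; exact key q p hq hp h

/-- local geodesics are geodesics -/
theorem Geo.loc (G : Geo S pt) {z p q r : S} (h1 : p ∈ MI z q) (h2 : q ∈ MI p r) (hne : p ≠ q) :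
    p ∈ MI z r := by
  have hpq : 0 < dist p q := dist_pos.2 hne
  set A := dist z p with hA
  set B := dist p q with hB
  set C := dist q r with hC
  have hA0 : 0 ≤ A := dist_nonneg
  have hC0 : 0 ≤ C := dist_nonneg
  have e1 : dist z q = A + B := (mem_MI.1 h1).symm
  have e2 : dist p r = B + C := (mem_MI.1 h2).symm
  set L := A + B + C with hL
  have hLp : 0 < L := by positivity
  have hα : A / L ∈ Icc (0:ℝ) 1 := ⟨by positivity, by rw [div_le_one hLp]; linarith⟩
  have hβ : (A + B) / L ∈ Icc (0:ℝ) 1 := ⟨by positivity, by rw [div_le_one hLp]; linarith⟩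
  set p' := pt z r (A / L) with hp'
  set q' := pt z r ((A + B) / L) with hq'
  -- p and p'
  have u1 : p = pt z q (A / (A + B)) := by
    have := G.uniq z q p h1 (by rw [e1]; linarith)
    rwa [e1] at this
  have pp : ∀ {s t : ℝ}, s ∈ Icc (0:ℝ) 1 → t ∈ Icc (0:ℝ) 1 → ∀ x y : S,
      pt x (pt x y t) s = pt x y (s * t) := by
    intro s t hs ht x y
    have hst : s * t ∈ Icc (0:ℝ) 1 :=
      ⟨mul_nonneg hs.1 ht.1, mul_le_one₀ hs.2 ht.1 ht.2⟩
    rcases (dist_nonneg (x := x) (y := y)).eq_or_lt with h0 | h0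
    · have := dist_eq_zero.1 h0.symm
      subst this
      rw [MI_self (G.mem x x ht), MI_self (G.mem x x hs), MI_self (G.mem x x hst)]
    · have := G.uniq x y _ (MI_trans (G.mem x y ht) (G.mem x (pt x y t) hs)) h0
      rw [this, G.dl _ _ hs, G.dl _ _ ht]
      congr 1; field_simp
  have sw : ∀ {s : ℝ}, s ∈ Icc (0:ℝ) 1 → ∀ x y : S, pt x y s = pt y x (1 - s) := by
    intro s hs x y
    rcases (dist_nonneg (x := x) (y := y)).eq_or_lt with h0 | h0
    · have := dist_eq_zero.1 h0.symm
      subst this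
      rw [MI_self (G.mem x x hs), MI_self (G.mem x x ⟨by linarith [hs.2], by linarith [hs.1]⟩)]
    · have := G.uniq y x (pt x y s) (by rw [MI_comm]; exact G.mem x y hs) (by rwa [dist_comm])
      rw [this, dist_comm y, G.dr _ _ hs, dist_comm y x]
      congr 1; field_simp
  have hab : A / (A + B) ∈ Icc (0:ℝ) 1 :=
    ⟨by positivity, by rw [div_le_one (by linarith)]; linarith⟩
  have hbc : C / (B + C) ∈ Icc (0:ℝ) 1 :=
    ⟨by positivity, by rw [div_le_one (by linarith)]; linarith⟩
  have hAB : A + B ≠ 0 := by linarith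
  have hBC : B + C ≠ 0 := by linarith
  have u1' : p' = pt z q' (A / (A + B)) := by
    rw [hq', pp hab hβ, hp']; congr 1; field_simp
  have i1 : dist p p' ≤ A / (A + B) * dist q q' := by
    conv_lhs => rw [u1, u1']
    exact G.conv z q q' _ hab
  have u2 : q = pt r p (C / (B + C)) := by
    have := G.uniq r p q (by rw [MI_comm]; exact h2) (by rw [dist_comm, e2]; linarith)
    rwa [dist_comm r p, e2, dist_comm r q] at this
  have u2' : q' = pt r p' (C / (B + C)) := by
    rw [hp', sw hα, pp hbc ⟨by linarith [hα.2], by linarith [hα.1]⟩, hq', sw hβ]; congr 1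
    rw [hL] at *; field_simp; ring
  have i2 : dist q q' ≤ C / (B + C) * dist p p' := by
    conv_lhs => rw [u2, u2']
    exact G.conv r p p' _ hbc
  have l1 : A / (A + B) < 1 := by rw [div_lt_one (by linarith)]; linarith
  have l2 : C / (B + C) < 1 := by rw [div_lt_one (by linarith)]; linarith
  have n1 := dist_nonneg (x := p) (y := p')
  have n2 := dist_nonneg (x := q) (y := q')
  have z1 : dist p p' = 0 := by
    have : dist q q' ≤ dist p p' := by nlinarith
    nlinarith
  rw [dist_eq_zero.1 z1]
  exact G.mem z r hα

theorem Geo.cont (G : Geo S pt) (a : S) :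
    ContinuousOn (fun p : S × ℝ => pt a p.1 p.2) (univ ×ˢ Icc (0:ℝ) 1) := by
  rintro ⟨y0, t0⟩ ⟨-, ht0⟩
  rw [ContinuousWithinAt, tendsto_iff_dist_tendsto_zero]
  have hlim : Filter.Tendsto (fun p : S × ℝ => dist p.1 y0 + |p.2 - t0| * dist a y0)
      (nhdsWithin (y0, t0) (univ ×ˢ Icc (0:ℝ) 1)) (nhds 0) := by
    have : Continuous (fun p : S × ℝ => dist p.1 y0 + |p.2 - t0| * dist a y0) := by fun_prop
    have h := this.tendsto (y0, t0)
    simp at h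
    exact h.mono_left nhdsWithin_le_nhds
  refine squeeze_zero' (Filter.Eventually.of_forall fun _ => dist_nonneg) ?_ hlim
  filter_upwards [self_mem_nhdsWithin] with p hp
  have ht := hp.2
  have h1 := dist_triangle (pt a p.1 p.2) (pt a y0 p.2) (pt a y0 t0)
  have h2 := G.conv a p.1 y0 p.2 ht
  have h3 := G.d a y0 p.2 ht t0 ht0
  have h4 : p.2 * dist p.1 y0 ≤ dist p.1 y0 := mul_le_of_le_one_left dist_nonneg ht.2
  linarith

theorem Geo.Jn_image (G : Geo S pt) (a : S) (K : Set S) :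
    Jn a K = (fun p : S × ℝ => pt a p.1 p.2) '' (K ×ˢ Icc (0:ℝ) 1) := by
  ext u
  constructor
  · rintro ⟨y, hy, hu⟩
    obtain ⟨t, ht, rfl⟩ := G.ex hu
    exact ⟨(y, t), ⟨hy, ht⟩, rfl⟩
  · rintro ⟨⟨y, t⟩, ⟨hy, ht⟩, rfl⟩
    exact ⟨y, hy, G.mem a y ht⟩

theorem Geo.Jn_compact (G : Geo S pt) (a : S) {K : Set S} (hK : IsCompact K) :
    IsCompact (Jn a K) := by
  rw [G.Jn_image]
  exact (hK.prod isCompact_Icc).image_of_continuousOn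
    ((G.cont a).mono (prod_mono (subset_univ _) le_rfl))

theorem Geo.Jn_preconn (G : Geo S pt) (a : S) {K : Set S} (hK : IsPreconnected K) :
    IsPreconnected (Jn a K) := by
  rw [G.Jn_image]
  exact (hK.prod isPreconnected_Icc).image _
    ((G.cont a).mono (prod_mono (subset_univ _) le_rfl))

theorem Geo.MI_compact (G : Geo S pt) (a b : S) : IsCompact (MI a b) := by
  rw [MI_eq_Jn]; exact G.Jn_compact a isCompact_singleton

theorem Geo.MI_preconn (G : Geo S pt) (a b : S) : IsPreconnected (MI a b) := by
  rw [MI_eq_Jn]; exact G.Jn_preconn a isPreconnected_singleton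

theorem Geo.MC_preconn (G : Geo S pt) {R : Set S} (h : MC R) : IsPreconnected R :=
  isPreconnected_of_forall_pair fun x hx y hy =>
    ⟨MI x y, h x hx y hy, left_MI _ _, right_MI _ _, G.MI_preconn x y⟩

theorem Geo.Bd_compact (G : Geo S pt) (a b c : S) : IsCompact (Bd a b c) :=
  ((G.MI_compact a b).union (G.MI_compact b c)).union (G.MI_compact a c)

theorem Geo.cont1 (G : Geo S pt) (a : S) {t : ℝ} (ht : t ∈ Icc (0:ℝ) 1) :
    Continuous (fun x => pt a x t) := by
  have := (G.cont a).comp_continuous (f := fun x => (x, t)) (by fun_prop) (fun x => ⟨mem_univ _, ht⟩)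
  exact this

/-- star-shaped compact sets have logarithms -/
theorem Geo.star_log (G : Geo S pt) {f : S → ℂ} (hf : Continuous f) (hi : Function.Injective f)
    {K : Set S} (hK : IsCompact K) (a : S) (hstar : ∀ x ∈ K, MI a x ⊆ K) {v : S} (hv : v ∉ K) :
    HasLog f K v := by
  obtain ⟨ε, hε, hgap⟩ := exists_gap hf hi hK hv
  have huc := hK.uniformContinuousOn_of_continuous hf.continuousOn
  rw [Metric.uniformContinuousOn_iff] at huc
  obtain ⟨δ, hδ, huc⟩ := huc ε hε
  obtain ⟨R, hR⟩ := hK.isBounded.subset_closedBall a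
  obtain ⟨N, hN⟩ := exists_nat_gt (max (R / δ) 0)
  have hN0 : (0:ℝ) < N := lt_of_le_of_lt (le_max_right _ _) hN
  have hN1 : R < N * δ := by
    rw [← div_lt_iff₀ hδ]; exact lt_of_le_of_lt (le_max_left _ _) hN
  have key : ∀ n : ℕ, n ≤ N → ∃ g : S → ℂ, ContinuousOn g K ∧
      ∀ x ∈ K, Complex.exp (g x) = f (pt a x (n / N)) - f v := by
    intro n
    induction n with
    | zero =>
      intro _
      refine ⟨fun _ => Complex.log (f a - f v), continuousOn_const, fun x hx => ?_⟩
      rw [Complex.exp_log]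
      · simp [G.p0]
      · rw [sub_ne_zero]; intro h
        exact hv (hi h ▸ hstar x hx (left_MI a x))
    | succ n ih =>
      intro hn
      obtain ⟨g, hg1, hg2⟩ := ih (by omega)
      have hnN : (n:ℝ) + 1 ≤ N := by exact_mod_cast hn
      have ht : (n / N : ℝ) ∈ Icc (0:ℝ) 1 :=
        ⟨by positivity, by rw [div_le_one hN0]; linarith⟩
      have ht' : (((n + 1 : ℕ) : ℝ) / N) ∈ Icc (0:ℝ) 1 :=
        ⟨by positivity, by rw [div_le_one hN0]; push_cast; linarith⟩
      have hm : ∀ x ∈ K, pt a x (n / N) ∈ K := fun x hx => hstar x hx (G.mem a x ht)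
      have hm' : ∀ x ∈ K, pt a x (((n + 1 : ℕ) : ℝ) / N) ∈ K :=
        fun x hx => hstar x hx (G.mem a x ht')
      have hne : ∀ x ∈ K, f (pt a x (n / N)) - f v ≠ 0 := fun x hx => by
        rw [sub_ne_zero]; intro h
        exact hv (hi h ▸ hm x hx)
      have hsl : ∀ x ∈ K, (f (pt a x (((n + 1 : ℕ) : ℝ) / N)) - f v) / (f (pt a x (n / N)) - f v)
          ∈ Complex.slitPlane := by
        intro x hx
        apply slit_of_close (hne x hx)
        rw [sub_sub_sub_cancel_right, ← dist_eq_norm]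
        refine lt_of_lt_of_le (huc _ (hm' x hx) _ (hm x hx) ?_) (hgap _ (hm x hx))
        rw [G.d a x _ ht' _ ht]
        have : (((n + 1 : ℕ) : ℝ) / N - n / N) = 1 / N := by push_cast; field_simp; ring
        rw [this, abs_of_pos (by positivity), one_div_mul_eq_div, div_lt_iff₀ hN0]
        have := hR hx
        rw [mem_closedBall, dist_comm] at this
        linarith
      refine ⟨fun x => g x + Complex.log ((f (pt a x (((n + 1 : ℕ) : ℝ) / N)) - f v) /
        (f (pt a x (n / N)) - f v)), ?_, ?_⟩
      · exact hg1.add (ContinuousOn.clog (ContinuousOn.div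
          ((hf.comp (G.cont1 a ht')).continuousOn.sub continuousOn_const)
          ((hf.comp (G.cont1 a ht)).continuousOn.sub continuousOn_const) hne) hsl)
      · intro x hx
        rw [Complex.exp_add, Complex.exp_log (Complex.slitPlane_ne_zero (hsl x hx)), hg2 x hx]
        have := hne x hx
        field_simp
  obtain ⟨g, h1, h2⟩ := key N le_rfl
  refine ⟨g, h1, fun x hx => ?_⟩
  rw [h2 x hx, div_self hN0.ne', G.p1]

theorem Geo.Jn_log (G : Geo S pt) {f : S → ℂ} (hf : Continuous f) (hi : Function.Injective f)
    {K : Set S} (hK : IsCompact K) (a : S) {v : S} (hv : v ∉ Jn a K) : HasLog f (Jn a K) v :=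
  G.star_log hf hi (G.Jn_compact a hK) a (fun _ => Jn_star) hv

end GeoFacts

section Main
variable {S : Type*} [MetricSpace S] {pt : S → S → ℝ → S}

theorem exists_change {f : S → ℂ} (hf : Continuous f) (hi : Function.Injective f)
    {K : Set S} (hK : IsCompact K) (hp : IsPreconnected K) {b c : S} (hb : b ∈ K) (hc : c ∈ K)
    (hL : ∀ v ∉ K, HasLog f K v) :
    ∃ A : S → ℂ, (∀ v ∉ K, ContinuousAt A v) ∧
      (∀ v ∉ K, Complex.exp (A v) = (f c - f v) / (f b - f v)) ∧
      ∀ v ∉ K, ∀ g : S → ℂ, ContinuousOn g K → (∀ x ∈ K, Complex.exp (g x) = f x - f v) →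
        A v = g c - g b := by
  choose! g hg1 hg2 using hL
  have h3 : ∀ v ∉ K, ∀ g' : S → ℂ, ContinuousOn g' K →
      (∀ x ∈ K, Complex.exp (g' x) = f x - f v) → g v c - g v b = g' c - g' b := by
    intro v hv g' h1 h2
    have := log_diff_const hp (hg1 v hv) h1 (fun x hx => (hg2 v hv x hx).trans (h2 x hx).symm) hb hc
    linear_combination -this
  refine ⟨fun v => g v c - g v b, ?_, ?_, h3⟩
  · intro v hv
    obtain ⟨ε, hε, hgap⟩ := exists_gap hf hi hK hv
    have hev : ∀ᶠ w in nhds v, ‖f w - f v‖ < ε :=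
      (isOpen_lt (f := fun w => ‖f w - f v‖) (by fun_prop) continuous_const).mem_nhds (by simpa)
    have hev2 : ∀ᶠ w in nhds v, w ∉ K := hK.isClosed.isOpen_compl.mem_nhds hv
    have hbv : f b - f v ≠ 0 := by rw [← hg2 v hv b hb]; exact Complex.exp_ne_zero _
    have hcv : f c - f v ≠ 0 := by rw [← hg2 v hv c hc]; exact Complex.exp_ne_zero _
    have : ContinuousAt (fun w => (g v c + Complex.log ((f c - f w) / (f c - f v))) -
        (g v b + Complex.log ((f b - f w) / (f b - f v)))) v := by
      apply ContinuousAt.sub <;> apply ContinuousAt.add continuousAt_const <;>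
        apply ContinuousAt.clog (by fun_prop)
      · rw [div_self hcv]; exact Complex.one_mem_slitPlane
      · rw [div_self hbv]; exact Complex.one_mem_slitPlane
    refine this.congr ?_
    filter_upwards [hev, hev2] with w hw hw2
    have := log_shift hf (hg1 v hv) (hg2 v hv) (v' := w)
      (fun x hx => lt_of_lt_of_le hw (hgap x hx))
    exact (h3 w hw2 _ this.1 this.2).symm
  · intro v hv
    rw [Complex.exp_sub, hg2 v hv c hc, hg2 v hv b hb]

theorem Geo.exists_nolog (G : Geo S pt) (f : S ≃ₜ ℂ) {a b c : S} (hbc : b ≠ c)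
    (h1 : ∀ x ∈ MI b c, x ∈ MI a b → x = b) (h2 : ∀ x ∈ MI b c, x ∈ MI a c → x = c) :
    ∃ v, v ∉ Bd a b c ∧ ¬ HasLog f (Bd a b c) v := by
  classical
  by_contra hcon
  push Not at hcon
  have hf := f.continuous
  have hi := f.injective
  have k2c : IsCompact (MI a b ∪ MI a c) := (G.MI_compact a b).union (G.MI_compact a c)
  obtain ⟨A1, a1, a2, a3⟩ := exists_change hf hi (G.MI_compact b c) (G.MI_preconn b c)
    (left_MI b c) (right_MI b c)
    (fun v hv => G.star_log hf hi (G.MI_compact b c) b (fun x hx w hw => MI_trans hx hw) hv)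
  obtain ⟨B1, b1, b2, b3⟩ := exists_change hf hi k2c
    (IsPreconnected.union a (left_MI a b) (left_MI a c) (G.MI_preconn a b) (G.MI_preconn a c))
    (Or.inl (right_MI a b) : b ∈ MI a b ∪ MI a c) (Or.inr (right_MI a c))
    (fun v hv => G.star_log hf hi k2c a (fun x hx w hw =>
      hx.imp (fun h => MI_trans h hw) (fun h => MI_trans h hw)) hv)
  have heq : ∀ v, v ∉ MI b c → v ∉ MI a b ∪ MI a c → A1 v = B1 v := by
    intro v hv1 hv2
    have hv : v ∉ Bd a b c := by
      rintro ((h | h) | h)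
      · exact hv2 (Or.inl h)
      · exact hv1 h
      · exact hv2 (Or.inr h)
    obtain ⟨g, g1, g2⟩ := hcon v hv
    have s1 : MI b c ⊆ Bd a b c := fun x hx => Or.inl (Or.inr hx)
    have s2 : MI a b ∪ MI a c ⊆ Bd a b c := fun x hx => hx.elim (fun h => Or.inl (Or.inl h)) Or.inr
    rw [a3 v hv1 g (g1.mono s1) fun x hx => g2 x (s1 hx),
      b3 v hv2 g (g1.mono s2) fun x hx => g2 x (s2 hx)]
  have hnot : ∀ v ∈ MI b c, v ≠ b → v ≠ c → v ∉ MI a b ∪ MI a c := by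
    rintro v hv hb hc (h | h)
    · exact hb (h1 v hv h)
    · exact hc (h2 v hv h)
  let F : S → ℂ := fun v => if v ∈ MI b c then B1 v else A1 v
  have Fc : ∀ v, v ≠ b → v ≠ c → ContinuousAt F v := by
    intro v hb hc
    by_cases hv : v ∈ MI b c
    · have hv2 := hnot v hv hb hc
      refine (b1 v hv2).congr ?_
      filter_upwards [k2c.isClosed.isOpen_compl.mem_nhds hv2] with w hw
      by_cases hw1 : w ∈ MI b c
      · simp [F, hw1]
      · simp [F, hw1, heq w hw1 hw]
    · refine (a1 v hv).congr ?_
      filter_upwards [(G.MI_compact b c).isClosed.isOpen_compl.mem_nhds hv] with w hw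
      have hw1 : w ∉ MI b c := hw
      simp [F, hw1]
  have Fe : ∀ v, v ≠ b → v ≠ c → Complex.exp (F v) = (f c - f v) / (f b - f v) := by
    intro v hb hc
    by_cases hv : v ∈ MI b c
    · simp only [F, hv, if_true]
      exact b2 v (hnot v hv hb hc)
    · simp only [F, hv, if_false]
      exact a2 v hv
  refine no_log (B := f b) (C := f c) (hi.ne hbc) (fun w => F (f.symm w)) ?_ ?_
  · intro w hb hc
    refine ContinuousAt.comp (f := f.symm) (g := F) (Fc _ ?_ ?_) f.symm.continuous.continuousAt
    · rintro rfl; simp at hb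
    · rintro rfl; simp at hc
  · intro w hb hc
    rw [Fe, f.apply_symm_apply]
    · rintro rfl; simp at hb
    · rintro rfl; simp at hc

theorem Geo.nz0 (G : Geo S pt) (f : S ≃ₜ ℂ) {a b c : S} (hbc : b ≠ c)
    (h1 : ∀ x ∈ MI b c, x ∈ MI a b → x = b) (h2 : ∀ x ∈ MI b c, x ∈ MI a c → x = c)
    {u y : S} (hy : y ∈ MI b c) (hu : u ∈ MI a y) (huB : u ∉ Bd a b c) :
    ¬ HasLog f (Bd a b c) u := by
  intro hL
  have hf := f.continuous
  have hi := f.injective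
  obtain ⟨v, hvB, hvL⟩ := G.exists_nolog f hbc h1 h2
  have hvJ : v ∈ Jn a (MI b c) := by
    by_contra h
    exact hvL ((G.Jn_log hf hi (G.MI_compact b c) a h).mono (Bd_sub a b c))
  obtain ⟨z, hz, hvz⟩ := hvJ
  have nK : ∀ {z v}, v ∈ MI a z → v ∉ Bd a b c → z ∉ MI a b ∪ MI a c := by
    rintro z v hv hvB (h | h)
    · exact hvB (Or.inl (Or.inl (MI_trans h hv)))
    · exact hvB (Or.inr (MI_trans h hv))
  have hzK := nK hvz hvB
  have hyK := nK hu huB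
  have hCb : MI z y ⊆ MI b c := G.MC_MI b c z hz y hy
  have e1 : ∀ {b c z y : S}, z ∈ MI b c → y ∈ MI b c → b ∈ MI z y → z = b ∨ y = b := by
    intro b c z y hz hy hb
    rw [mem_MI] at hb
    rcases G.order' hz hy with h | h
    · rw [mem_MI] at h
      left; apply dist_eq_zero.1
      rw [dist_comm b z] at h; linarith
    · rw [mem_MI] at h
      right; apply dist_eq_zero.1
      rw [dist_comm z b, dist_comm z y] at hb
      rw [dist_comm b y] at *
      linarith
  have hCK : ∀ x ∈ MI z y, x ∉ MI a b ∪ MI a c := by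
    rintro x hx (h | h)
    · have := h1 x (hCb hx) h
      subst this
      rcases e1 hz hy hx with h | h
      · exact hzK (h ▸ Or.inl (right_MI _ _))
      · exact hyK (h ▸ Or.inl (right_MI _ _))
    · have := h2 x (hCb hx) h
      subst this
      rw [MI_comm] at hz hy
      rcases e1 hz hy hx with h | h
      · exact hzK (h ▸ Or.inr (right_MI _ _))
      · exact hyK (h ▸ Or.inr (right_MI _ _))
  have sing : ∀ x ∈ MI z y, ∀ w ∈ MI a x, w ∈ MI b c → w = x := by
    intro x hx w hw hwb
    by_contra hne
    have hxK := hCK x hx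
    rcases G.order' hwb (hCb hx) with h | h
    · have hxw : x ∈ MI w c := MI_trans' (hCb hx) h
      have := h2 w hwb (G.loc hw hxw hne)
      subst this
      exact hne (MI_self hxw).symm
    · have hxw : x ∈ MI w b := by rw [MI_comm]; exact h
      have := h1 w hwb (G.loc hw hxw hne)
      subst this
      exact hne (MI_self hxw).symm
  have link0 : ∀ x ∈ MI z y, ∀ v ∈ MI a x, ∀ w ∈ MI a x, v ∉ Bd a b c → w ∉ Bd a b c →
      v ∈ MI a w → Disjoint (MI v w) (Bd a b c) := by
    intro x hx v hv w hw hvB hwB hvw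
    rw [Set.disjoint_left]
    intro p hp hpB
    have hpw : p ∈ MI a w := MI_trans2 hvw hp
    have hvp : v ∈ MI a p := MI_trans2' hvw hp
    rcases hpB with (h | h) | h
    · exact hvB (Or.inl (Or.inl (MI_trans h hvp)))
    · have := sing x hx p (MI_trans hw hpw) h
      subst this
      rw [mem_MI] at hw hpw
      have : w = p := by
        apply dist_eq_zero.1
        rw [dist_comm p w] at hpw
        linarith [dist_nonneg (x := w) (y := p)]
      exact hwB (this ▸ Or.inl (Or.inr h))
    · exact hvB (Or.inr (MI_trans h hvp))
  have link : ∀ x ∈ MI z y, ∀ v ∈ MI a x, ∀ w ∈ MI a x, v ∉ Bd a b c → w ∉ Bd a b c →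
      Disjoint (MI v w) (Bd a b c) := by
    intro x hx v hv w hw hvB hwB
    rcases G.order' hv hw with h | h
    · exact link0 x hx v hv w hw hvB hwB h
    · rw [MI_comm]; exact link0 x hx w hw v hv hwB hvB h
  -- choose the parameter
  have k2c : IsCompact (MI a b ∪ MI a c) := (G.MI_compact a b).union (G.MI_compact a c)
  obtain ⟨δ, hδ, hth⟩ := (G.MI_compact z y).exists_thickening_subset_open
    k2c.isClosed.isOpen_compl (fun x hx => hCK x hx)
  obtain ⟨R, hR⟩ := (G.MI_compact z y).isBounded.subset_closedBall a
  have hR0 : 0 ≤ R := by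
    have := hR (left_MI z y)
    rw [mem_closedBall] at this
    exact dist_nonneg.trans this
  obtain ⟨t, ht, ht1, htR⟩ : ∃ t ∈ Icc (0:ℝ) 1, t < 1 ∧ (1 - t) * R < δ := by
    have hp : 0 < R + δ := by linarith
    refine ⟨1 - δ / (R + δ), ⟨?_, ?_⟩, ?_, ?_⟩
    · rw [sub_nonneg, div_le_one hp]; linarith
    · have : 0 ≤ δ / (R + δ) := by positivity
      linarith
    · have : 0 < δ / (R + δ) := by positivity
      linarith
    · rw [sub_sub_cancel, div_mul_eq_mul_div, div_lt_iff₀ hp]; nlinarith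
  have hwB : ∀ x ∈ MI z y, pt a x t ∉ Bd a b c := by
    intro x hx hB
    have hd := G.dr a x ht
    have hxR : dist a x ≤ R := by
      have := hR hx
      rwa [mem_closedBall, dist_comm] at this
    have hK : pt a x t ∉ MI a b ∪ MI a c := by
      apply hth
      rw [mem_thickening_iff]
      refine ⟨x, hx, ?_⟩
      rw [hd]
      nlinarith [ht.2]
    rcases hB with (h | h) | h
    · exact hK (Or.inl h)
    · have := sing x hx _ (G.mem a x ht) h
      rw [this, dist_self] at hd
      have : dist a x = 0 := by
        rcases mul_eq_zero.1 hd.symm with h | h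
        · linarith
        · exact h
      have := dist_eq_zero.1 this
      subst this
      exact hCK a hx (Or.inl (left_MI _ _))
    · exact hK (Or.inr h)
  have hBc := G.Bd_compact a b c
  have s1 : HasLog f (Bd a b c) (pt a y t) :=
    hL.const_on hf hi hBc (G.MI_preconn u (pt a y t))
      (link y (right_MI _ _) u hu _ (G.mem a y ht) huB (hwB y (right_MI _ _)))
      (left_MI _ _) (right_MI _ _)
  have s2 : HasLog f (Bd a b c) (pt a z t) := by
    refine s1.const_on hf hi hBc (C := (fun x => pt a x t) '' MI z y)
      ((G.MI_preconn z y).image _ (G.cont1 a ht).continuousOn) ?_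
      ⟨y, right_MI _ _, rfl⟩ ⟨z, left_MI _ _, rfl⟩
    rw [Set.disjoint_left]
    rintro _ ⟨x, hx, rfl⟩
    exact hwB x hx
  exact hvL (s2.const_on hf hi hBc (G.MI_preconn (pt a z t) v)
      (link z (left_MI _ _) _ (G.mem a z ht) v hvz (hwB z (left_MI _ _)) hvB)
      (left_MI _ _) (right_MI _ _))

theorem Geo.last (G : Geo S pt) (a b y : S) :
    ∃ b', b' ∈ MI b y ∧ b' ∈ MI a b ∧ ∀ x ∈ MI b' y, x ∈ MI a b → x = b' := by
  obtain ⟨b', hb', hm⟩ := ((G.MI_compact b y).inter (G.MI_compact a b)).exists_isMaxOn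
    ⟨b, left_MI _ _, right_MI _ _⟩ (f := fun x => dist b x) (by fun_prop)
  refine ⟨b', hb'.1, hb'.2, fun x hx hxa => ?_⟩
  have h1 := hm (show x ∈ MI b y ∩ MI a b from ⟨MI_trans2 hb'.1 hx, hxa⟩)
  have h2 := MI_trans2' hb'.1 hx
  rw [mem_MI] at h2
  simp only [mem_setOf_eq] at h1
  apply (dist_eq_zero.1 _).symm
  linarith [dist_nonneg (x := b') (y := x)]

theorem Geo.nz (G : Geo S pt) (f : S ≃ₜ ℂ) {a b c : S}
    {u y : S} (hy : y ∈ MI b c) (hu : u ∈ MI a y) (huB : u ∉ Bd a b c) :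
    ¬ HasLog f (Bd a b c) u := by
  obtain ⟨b', hb1, hb2, hb3⟩ := G.last a b y
  obtain ⟨c', hc1, hc2, hc3⟩ := G.last a c y
  have hyb : y ∉ MI a b := fun h => huB (Or.inl (Or.inl (MI_trans h hu)))
  have hyc : y ∉ MI a c := fun h => huB (Or.inr (MI_trans h hu))
  have hc1' : c' ∈ MI y c := by rwa [MI_comm]
  have hy' : y ∈ MI b' c' := MI_trans2' (MI_trans' hy hb1) hc1'
  have sub1 : MI b' c' ⊆ MI b c :=
    G.MC_MI b c b' (MI_trans hy hb1) c' (MI_trans2 hy hc1')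
  have sub2 : MI a b' ⊆ MI a b := fun x hx => MI_trans hb2 hx
  have sub3 : MI a c' ⊆ MI a c := fun x hx => MI_trans hc2 hx
  have hsub : Bd a b' c' ⊆ Bd a b c := union_subset_union (union_subset_union sub2 sub1) sub3
  intro hL
  refine G.nz0 f ?_ ?_ ?_ hy' hu (fun h => huB (hsub h)) (hL.mono hsub)
  · rintro rfl
    exact hyb (MI_self hy' ▸ hb2)
  · intro x hx hxa
    rcases G.order' hx hy' with h | h
    · exact hb3 x h (sub2 hxa)
    · exfalso
      have hxy : x ∈ MI y c' := MI_trans' hx h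
      have : y ∈ MI b x := MI_trans2' hy (MI_trans hc1' hxy)
      exact hyb (G.MC_MI a b b (right_MI _ _) x (sub2 hxa) this)
  · intro x hx hxa
    rcases G.order' hx hy' with h | h
    · exfalso
      have : y ∈ MI x c := MI_trans' hy (MI_trans2 hb1 h)
      exact hyc (G.MC_MI a c x (sub3 hxa) c (right_MI _ _) this)
    · have hxy : x ∈ MI y c' := MI_trans' hx h
      exact hc3 x (by rwa [MI_comm]) (sub3 hxa)

theorem Geo.peano (G : Geo S pt) (f : S ≃ₜ ℂ) {a b c u : S} (hu : u ∈ Jn c (MI a b)) :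
    u ∈ Jn a (MI b c) := by
  by_contra h
  have huB : u ∉ Bd a b c := fun h' => h (Bd_sub a b c h')
  obtain ⟨y, hy, huy⟩ := hu
  have := G.nz f hy huy (by rwa [Bd_rot])
  rw [Bd_rot] at this
  exact this ((G.Jn_log f.continuous f.injective (G.MI_compact b c) a h).mono (Bd_sub a b c))

theorem Geo.Jn_MC (G : Geo S pt) (f : S ≃ₜ ℂ) {q : S} {C : Set S} (hC : MC C) : MC (Jn q C) := by
  rintro x ⟨p, hp, hx⟩ x' ⟨p', hp', hx'⟩ u hu
  obtain ⟨w, hw, huw⟩ : u ∈ Jn q (MI p x') := G.peano f ⟨x, hx, by rwa [MI_comm]⟩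
  obtain ⟨y, hy, hwy⟩ : w ∈ Jn q (MI p' p) := G.peano f ⟨x', hx', hw⟩
  exact ⟨y, hC p' hp' p hp hy, MI_trans hwy huw⟩

theorem Geo.four (G : Geo S pt) (f : S ≃ₜ ℂ) {a b c d u p : S} (hp : p ∈ Jn a (MI b c))
    (hu : u ∈ MI d p) :
    u ∈ Jn a (MI b c) ∨ u ∈ Jn d (MI b c) ∨ u ∈ Jn d (MI a b) := by
  by_contra hcon
  push Not at hcon
  obtain ⟨n1, n2, n3⟩ := hcon
  have hf := f.continuous
  have hi := f.injective
  have L1 := G.Jn_log hf hi (G.MI_compact b c) a n1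
  have L2 := G.Jn_log hf hi (G.MI_compact b c) d n2
  have L3 := G.Jn_log hf hi (G.MI_compact a b) d n3
  have c1 := (G.Jn_compact a (G.MI_compact b c)).isClosed
  have c2 := (G.Jn_compact d (G.MI_compact b c)).isClosed
  have c3 := (G.Jn_compact d (G.MI_compact a b)).isClosed
  have m1 := G.Jn_MC f (q := a) (G.MC_MI b c)
  have m2 := G.Jn_MC f (q := d) (G.MC_MI b c)
  have m3 := G.Jn_MC f (q := d) (G.MC_MI a b)
  have L12 := L1.union L2 c1 c2 (G.MC_preconn (m1.inter m2))
  have b1 : b ∈ Jn a (MI b c) := sub_Jn (left_MI _ _)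
  have b2 : b ∈ Jn d (MI b c) := sub_Jn (left_MI _ _)
  have b3 : b ∈ Jn d (MI a b) := sub_Jn (right_MI _ _)
  have L123 := L12.union L3 (c1.union c2) c3 (by
    rw [union_inter_distrib_right]
    exact IsPreconnected.union b ⟨b1, b3⟩ ⟨b2, b3⟩ (G.MC_preconn (m1.inter m3))
      (G.MC_preconn (m2.inter m3)))
  obtain ⟨y, hy, hpy⟩ := hp
  have s1 : MI d a ⊆ Jn d (MI a b) := MI_sub_Jn (left_MI _ _)
  have s2 : MI a y ⊆ Jn a (MI b c) := MI_sub_Jn hy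
  have s3 : MI d y ⊆ Jn d (MI b c) := MI_sub_Jn hy
  have hsub : Bd d a y ⊆ (Jn a (MI b c) ∪ Jn d (MI b c)) ∪ Jn d (MI a b) := by
    rintro x ((h | h) | h)
    · exact Or.inr (s1 h)
    · exact Or.inl (Or.inl (s2 h))
    · exact Or.inl (Or.inr (s3 h))
  refine G.nz f hpy hu ?_ (L123.mono hsub)
  rintro ((h | h) | h)
  · exact n3 (s1 h)
  · exact n1 (s2 h)
  · exact n2 (s3 h)

end Main

theorem hull_sub {S : Type*} {seg : S → S → Set S} {Q R : Set S} (h : SegConvex seg R)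
    (hQ : Q ⊆ R) : segConvexHull seg Q ⊆ R := fun _ hx => hx R ⟨h, hQ⟩

theorem sub_hull {S : Type*} {seg : S → S → Set S} {Q : Set S} : Q ⊆ segConvexHull seg Q :=
  fun _ hx _ hR => hR.2 hx

theorem hull_convex {S : Type*} {seg : S → S → Set S} {Q : Set S} :
    SegConvex seg (segConvexHull seg Q) :=
  fun p hp q hq _ hx R hR => hR.1 p (hp R hR) q (hq R hR) hx

theorem Jn_sub_hull {S : Type*} [MetricSpace S] {x y z : S} :
    Jn x (MI y z) ⊆ segConvexHull MI {x, y, z} := by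
  rintro u ⟨w, hw, hu⟩
  exact hull_convex x (sub_hull (by simp)) w
    (hull_convex y (sub_hull (by simp)) z (sub_hull (by simp)) hw) hu

theorem main_aux {S : Type*} [MetricSpace S] {pt : S → S → ℝ → S} (G : Geo S pt) (f : S ≃ₜ ℂ)
    (Q : Set S) (hQ : Q.Finite) :
    ∀ u ∈ segConvexHull MI Q, ∃ x ∈ Q, ∃ y ∈ Q, ∃ z ∈ Q, u ∈ Jn x (MI y z) := by
  induction Q, hQ using Set.Finite.induction_on with
  | empty =>
    intro u hu
    exact (hull_sub (R := ∅) (by intro p hp; exact hp.elim) (by simp) hu).elim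
  | @insert q Q _ _ ih =>
    intro u hu
    rcases Q.eq_empty_or_nonempty with rfl | ⟨r, hr⟩
    · have : u ∈ ({q} : Set S) := by
        refine hull_sub (R := {q}) ?_ (by simp) hu
        rintro p rfl r rfl x hx
        exact MI_self hx
      rw [mem_singleton_iff] at this
      subst this
      exact ⟨u, by simp, u, by simp, u, by simp, u, left_MI _ _, left_MI _ _⟩
    · have hJ : u ∈ Jn q (segConvexHull MI Q) := by
        refine hull_sub (G.Jn_MC f hull_convex) ?_ hu
        rintro x (rfl | hx)
        · exact ⟨r, sub_hull hr, left_MI _ _⟩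
        · exact sub_Jn (sub_hull hx)
      obtain ⟨p, hp, hu⟩ := hJ
      obtain ⟨x, hx, y, hy, z, hz, hp⟩ := ih p hp
      have i := fun {w : S} (h : w ∈ Q) => (Set.mem_insert_of_mem q h)
      have iq : q ∈ insert q Q := Set.mem_insert _ _
      rcases G.four f hp hu with h | h | h
      · exact ⟨x, i hx, y, i hy, z, i hz, h⟩
      · exact ⟨q, iq, y, i hy, z, i hz, h⟩
      · exact ⟨q, iq, x, i hx, y, i hy, h⟩

/-- Carathéodory number 3: for a finite nonempty `Q`,
`conv(Q) = ⋃ {conv({x,y,z}) : x,y,z ∈ Q}`. -/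
theorem busemann_surface_caratheodory {S : Type*} [MetricSpace S]
    (hS : IsBusemannSurface S)
    (seg : S → S → Set S) (hseg : ∀ x y : S, IsGeodesicSegment x y (seg x y))
    (Q : Set S) (hQfin : Q.Finite) (hQne : Q.Nonempty) :
    segConvexHull seg Q =
      ⋃ x ∈ Q, ⋃ y ∈ Q, ⋃ z ∈ Q, segConvexHull seg {x, y, z} := by
  obtain ⟨hB, ⟨e⟩⟩ := hS
  obtain ⟨pt, G⟩ := exists_geo hB
  have f : S ≃ₜ ℂ := e.trans Complex.equivRealProdCLM.symm.toHomeomorph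
  have hs : seg = MI := by
    funext x y
    exact seg_eq hB (hseg x y)
  subst hs
  apply Set.Subset.antisymm
  · intro u hu
    obtain ⟨x, hx, y, hy, z, hz, h⟩ := main_aux G f Q hQfin u hu
    simp only [mem_iUnion]
    exact ⟨x, hx, y, hy, z, hz, Jn_sub_hull h⟩
  · intro u hu
    simp only [mem_iUnion] at hu
    obtain ⟨x, hx, y, hy, z, hz, h⟩ := hu
    refine hull_sub hull_convex ?_ h
    rintro w (rfl | rfl | rfl)
    · exact sub_hull hx
    · exact sub_hull hy
    · exact sub_hull hz
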